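/- If the Lengyel transfer game L(b;x₁,y₁;x₂,y₂) has no bad pairs of 2s among positions whose first coordinates are at least x₀ (i.e. there is no bad pair of 2s (x,y), (x′,y′) with x ≥ x₀ and x′ ≥ x₀), then it has diagonal periodicity after x₀ + max{x₁,x₂}: SG*(x,y) = SG*(x + x₁ + x₂, y − y₁ − y₂) for all (x,y) with x ≥ x₀ + max{x₁,x₂} and y ≥ y₁ + y₂. -/

import Mathlib

/-- The minimum excludant of a set of naturals: the least natural number not in the set. -/
noncomputable def mex (S : Set ℕ) : ℕ := sInf {n : ℕ | n ∉ S}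

/-- `SG` is the Sprague–Grundy function of the Lengyel transfer game `L(b; x₁,y₁; x₂,y₂)`:
from `(x,y)` one may move to `(x, y−b)` (when `y ≥ b`), to `(x−x₁, y+y₁)` (when `x ≥ x₁`),
or to `(x−x₂, y+y₂)` (when `x ≥ x₂`), and `SG` satisfies the mex recurrence. -/
def IsLengyelSG (b x1 y1 x2 y2 : ℕ) (SG : ℕ → ℕ → ℕ) : Prop :=
  ∀ x y : ℕ, SG x y = mex
    ((if b ≤ y then ({SG x (y - b)} : Set ℕ) else ∅) ∪
     (if x1 ≤ x then ({SG (x - x1) (y + y1)} : Set ℕ) else ∅) ∪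
     (if x2 ≤ x then ({SG (x - x2) (y + y2)} : Set ℕ) else ∅))

/-!
Adding `b` to `y` interchanges the values `0` and `1` of `SG*` and preserves `2`: this passes from
the options of a position to the position itself. A `2` therefore never gets its `0` or its `1`
from the move `y ↦ y - b`: both come from transfers.

Let `Q` be the diagonal translate `P + (x₁ + x₂, -(y₁ + y₂))`. The first and second transfers out
of `Q` lead to positions `A` and `B` from which the other transfer leads to `P`. If `SG* P = m < 2`,
then neither `A` nor `B` has value `m`, so `SG* Q ≠ 2`, and since `A` and `B` are not a bad pair,
one of them has value `1 - m`, so `SG* Q = m`. If `SG* P = 2`, then the two transfers out of `P`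
have values `0` and `1`; by the first case these are also the values of their diagonal translates,
which are `A` and `B`, so `SG* Q = 2`.
-/

theorem mex_notMem {S : Set ℕ} (hS : S.Finite) : mex S ∉ S :=
  Nat.sInf_mem (s := {n | n ∉ S}) hS.infinite_compl.nonempty

theorem mem_of_lt_mex {S : Set ℕ} {n : ℕ} (hn : n < mex S) : n ∈ S :=
  not_not.mp (Nat.notMem_of_lt_sInf hn)

/-- The values of `SG` at the options of `(x, y)` in the game where one may take `b` from `y`, or,
for some `t ∈ T`, remove `t.1` from `x` and add `t.2` to `y`. Options are described additively, so
that no truncated subtraction occurs. -/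
def optionValues (b : ℕ) (T : Set (ℕ × ℕ)) (SG : ℕ → ℕ → ℕ) (x y : ℕ) : Set ℕ :=
  {n | (∃ z, z + b = y ∧ SG x z = n) ∨ ∃ t ∈ T, ∃ z, z + t.1 = x ∧ SG z (y + t.2) = n}

/-- `SG` is the Sprague–Grundy function of the game with options as in `optionValues`, where `T` is
an arbitrary set of transfers decreasing `x`. The mex recurrence is split into its two halves. -/
structure IsTransferGrundy (b : ℕ) (T : Set (ℕ × ℕ)) (SG : ℕ → ℕ → ℕ) : Prop where
  transfer_pos : ∀ t ∈ T, 0 < t.1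
  notMem_optionValues : ∀ x y, SG x y ∉ optionValues b T SG x y
  mem_optionValues_of_lt : ∀ {m x y}, m < SG x y → m ∈ optionValues b T SG x y

theorem finite_optionValues {T : Set (ℕ × ℕ)} (hT : T.Finite) (b : ℕ) (SG : ℕ → ℕ → ℕ)
    (x y : ℕ) : (optionValues b T SG x y).Finite := by
  refine (((Set.finite_singleton (y - b)).image (SG x)).union
    (hT.image fun t => SG (x - t.1) (y + t.2))).subset ?_
  rintro n (⟨z, rfl, rfl⟩ | ⟨t, ht, z, rfl, rfl⟩)
  · exact .inl ⟨z, by simp, rfl⟩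
  · exact .inr ⟨t, ht, by simp⟩

theorem isTransferGrundy_of_eq_mex {b : ℕ} {T : Set (ℕ × ℕ)} {SG : ℕ → ℕ → ℕ} (hT : T.Finite)
    (hpos : ∀ t ∈ T, 0 < t.1)
    (hmex : ∀ x y, SG x y = mex (optionValues b T SG x y)) : IsTransferGrundy b T SG where
  transfer_pos := hpos
  notMem_optionValues x y := by
    nth_rw 1 [hmex x y]
    exact mex_notMem (finite_optionValues hT b SG x y)
  mem_optionValues_of_lt hm := mem_of_lt_mex (hm.trans_eq (hmex _ _))

namespace IsLengyelSG

variable {b x1 y1 x2 y2 : ℕ} {SG : ℕ → ℕ → ℕ}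

theorem eq_mex_optionValues (h : IsLengyelSG b x1 y1 x2 y2 SG) (x y : ℕ) :
    SG x y = mex (optionValues b {(x1, y1), (x2, y2)} SG x y) := by
  have exists_add_eq (d s : ℕ) (p : ℕ → Prop) : (∃ z, z + d = s ∧ p z) ↔ d ≤ s ∧ p (s - d) :=
    ⟨by rintro ⟨z, rfl, hz⟩; simpa using hz, fun ⟨hd, hp⟩ => ⟨s - d, Nat.sub_add_cancel hd, hp⟩⟩
  rw [h x y]
  congr 1
  ext n
  simp only [optionValues, Set.mem_insert_iff, Set.mem_singleton_iff, exists_eq_or_imp,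
    exists_eq_left, exists_add_eq, Set.mem_ite_empty_right, Set.mem_union, Set.mem_ofPred_eq,
    or_assoc, eq_comm (a := n)]

theorem isTransferGrundy (h : IsLengyelSG b x1 y1 x2 y2 SG) (hx1 : 0 < x1) (hx2 : 0 < x2) :
    IsTransferGrundy b {(x1, y1), (x2, y2)} SG :=
  isTransferGrundy_of_eq_mex (Set.toFinite _) (by simp [hx1, hx2]) h.eq_mex_optionValues

end IsLengyelSG

/-- Adding `b` to the second coordinate of `(x, y)` interchanges the values `0` and `1`. As this is
an equivalence for both values, it also says that values at least `2` remain so. -/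
def SwapsAt (b : ℕ) (SG : ℕ → ℕ → ℕ) (x y : ℕ) : Prop :=
  ∀ m < 2, SG x (y + b) = m ↔ SG x y = 1 - m

namespace IsTransferGrundy

section Column

variable {b : ℕ} {T : Set (ℕ × ℕ)} {SG : ℕ → ℕ → ℕ}

theorem take_ne (h : IsTransferGrundy b T SG) (x y : ℕ) : SG x (y + b) ≠ SG x y :=
  fun heq => h.notMem_optionValues x (y + b) (.inl ⟨y, rfl, heq.symm⟩)

theorem take_pos (h : IsTransferGrundy b T SG) : 0 < b :=
  Nat.pos_of_ne_zero fun hb => h.take_ne 0 0 (by rw [hb])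

theorem transfer_ne (h : IsTransferGrundy b T SG) {t : ℕ × ℕ} (ht : t ∈ T) (x y : ℕ) :
    SG (x + t.1) y ≠ SG x (y + t.2) :=
  fun heq => h.notMem_optionValues (x + t.1) y (.inr ⟨t, ht, x, rfl, heq.symm⟩)

theorem exists_transfer_eq_of_swapsAt (h : IsTransferGrundy b T SG) {m x y : ℕ}
    (hswap : ∀ z, z + b = y → SwapsAt b SG x z) (hy : 2 ≤ SG x y) (hm : m < 2) :
    ∃ t ∈ T, ∃ z, z + t.1 = x ∧ SG z (y + t.2) = m := by
  refine (h.mem_optionValues_of_lt (hm.trans_le hy)).resolve_left ?_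
  rintro ⟨z, rfl, hz⟩
  have : SG x (z + b) = 1 - m := (hswap z rfl (1 - m) (by lia)).2 (by lia)
  lia

theorem swapsAt_of_options (h : IsTransferGrundy b T SG) {x y : ℕ}
    (htake : ∀ z, z + b = y → SwapsAt b SG x z)
    (htransfer : ∀ t ∈ T, ∀ z, z + t.1 = x → SwapsAt b SG z (y + t.2)) :
    SwapsAt b SG x y := by
  intro m hm
  have take_ne := h.take_ne x y
  constructor <;> intro hxy
  · have not_two_le : ¬ 2 ≤ SG x y := by
      intro hle
      obtain ⟨t, ht, z, rfl, hz⟩ :=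
        h.exists_transfer_eq_of_swapsAt htake hle (m := 1 - m) (by lia)
      have hzb : SG z (y + t.2 + b) = m := (htransfer t ht z rfl m hm).2 hz
      apply h.transfer_ne ht z (y + b)
      rw [hxy, add_right_comm, hzb]
    lia
  · have notMem : m ∉ optionValues b T SG x (y + b) := by
      rintro (⟨z, hz, hzm⟩ | ⟨t, ht, z, rfl, hzm⟩)
      · obtain rfl : z = y := Nat.add_right_cancel hz
        lia
      · rw [add_right_comm, htransfer t ht z rfl m hm] at hzm
        exact h.transfer_ne ht z y (hxy.trans hzm.symm)
    have not_lt : ¬ m < SG x (y + b) := fun hlt => notMem (h.mem_optionValues_of_lt hlt)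
    lia

theorem swapsAt (h : IsTransferGrundy b T SG) (x y : ℕ) : SwapsAt b SG x y := by
  induction x using Nat.strong_induction_on generalizing y with
  | _ x ihx =>
    induction y using Nat.strong_induction_on with
    | _ y ihy =>
      refine h.swapsAt_of_options (fun z hz => ihy z ?_) (fun t ht z hz => ihx z ?_ _)
      · have := h.take_pos
        lia
      · have := h.transfer_pos t ht
        lia

theorem exists_transfer_eq_of_two_le (h : IsTransferGrundy b T SG) {m x y : ℕ}
    (hxy : 2 ≤ SG x y) (hm : m < 2) : ∃ t ∈ T, ∃ z, z + t.1 = x ∧ SG z (y + t.2) = m :=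
  h.exists_transfer_eq_of_swapsAt (fun z _ => h.swapsAt x z) hxy hm

end Column

end IsTransferGrundy

/-- A bad pair of 2s, indexed by `(x, y)` such that `(x, y + y₁ + y₂)` is the common option of its
two members. The condition `SG* = 2` is encoded as `2 ≤ SG`. -/
def IsBadPair (x1 y1 x2 y2 : ℕ) (SG : ℕ → ℕ → ℕ) (x y : ℕ) : Prop :=
  2 ≤ SG (x + x1) (y + y2) ∧ 2 ≤ SG (x + x2) (y + y1)

namespace IsTransferGrundy

section Diagonal

variable {b x1 y1 x2 y2 : ℕ} {SG : ℕ → ℕ → ℕ}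

theorem eq_or_eq_of_two_le (h : IsTransferGrundy b {(x1, y1), (x2, y2)} SG) {m x y z1 z2 : ℕ}
    (hz1 : z1 + x1 = x) (hz2 : z2 + x2 = x) (hxy : 2 ≤ SG x y) (hm : m < 2) :
    SG z1 (y + y1) = m ∨ SG z2 (y + y2) = m := by
  obtain ⟨t, rfl | rfl, z, hz, hzm⟩ := h.exists_transfer_eq_of_two_le hxy hm
  · obtain rfl : z = z1 := Nat.add_right_cancel (hz.trans hz1.symm)
    exact .inl hzm
  · obtain rfl : z = z2 := Nat.add_right_cancel (hz.trans hz2.symm)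
    exact .inr hzm

theorem diagonal_eq_of_lt_two (h : IsTransferGrundy b {(x1, y1), (x2, y2)} SG) {x y : ℕ}
    (hbad : ¬ IsBadPair x1 y1 x2 y2 SG x y) (hlt : SG x (y + y1 + y2) < 2) :
    SG (x + x1 + x2) y = SG x (y + y1 + y2) := by
  have A_ne_P : SG (x + x2) (y + y1) ≠ SG x (y + y1 + y2) :=
    h.transfer_ne (t := (x2, y2)) (.inr rfl) x (y + y1)
  have B_ne_P : SG (x + x1) (y + y2) ≠ SG x (y + y1 + y2) := by
    rw [add_right_comm y]
    exact h.transfer_ne (t := (x1, y1)) (.inl rfl) x (y + y2)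
  have Q_ne_A : SG (x + x1 + x2) y ≠ SG (x + x2) (y + y1) := by
    rw [add_right_comm x]
    exact h.transfer_ne (t := (x1, y1)) (.inl rfl) (x + x2) y
  have Q_ne_B : SG (x + x1 + x2) y ≠ SG (x + x1) (y + y2) :=
    h.transfer_ne (t := (x2, y2)) (.inr rfl) (x + x1) y
  have Q_lt_two : SG (x + x1 + x2) y < 2 := by
    by_contra! hle
    exact (h.eq_or_eq_of_two_le (add_right_comm x x2 x1) rfl hle hlt).elim A_ne_P B_ne_P
  unfold IsBadPair at hbad
  lia

theorem two_le_diagonal (h : IsTransferGrundy b {(x1, y1), (x2, y2)} SG) {x y z1 z2 : ℕ}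
    (hz1 : z1 + x1 = x) (hz2 : z2 + x2 = x)
    (hbad1 : ¬ IsBadPair x1 y1 x2 y2 SG z1 (y + y1))
    (hbad2 : ¬ IsBadPair x1 y1 x2 y2 SG z2 (y + y2))
    (hle : 2 ≤ SG x (y + y1 + y2)) : 2 ≤ SG (x + x1 + x2) y := by
  by_contra! hlt
  rcases h.eq_or_eq_of_two_le hz1 hz2 hle hlt with hm | hm
  · rw [add_right_comm (y + y1)] at hm
    have A_eq_Q : SG (z1 + x1 + x2) (y + y1) = SG (x + x1 + x2) y :=
      (h.diagonal_eq_of_lt_two hbad1 (hm.trans_lt hlt)).trans hm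
    apply h.transfer_ne (t := (x1, y1)) (.inl rfl) (x + x2) y
    rw [add_right_comm x, ← A_eq_Q, hz1]
  · rw [add_right_comm y] at hm
    have B_eq_Q : SG (z2 + x1 + x2) (y + y2) = SG (x + x1 + x2) y :=
      (h.diagonal_eq_of_lt_two hbad2 (hm.trans_lt hlt)).trans hm
    apply h.transfer_ne (t := (x2, y2)) (.inr rfl) (x + x1) y
    rw [← B_eq_Q, add_right_comm z2, hz2]

end Diagonal

end IsTransferGrundy

/-- If `L(b;x₁,y₁;x₂,y₂)` has no bad pairs of 2s among positions with first coordinate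
at least `x₀` — i.e. no positions `(x,y)`, `(x',y')` with `x, x' ≥ x₀`,
`SG*(x,y) = SG*(x',y') = 2`, `x − x' = x₁ − x₂` and `y − y' = y₂ − y₁` (as integers) —
then it has diagonal periodicity after `x₀ + max{x₁,x₂}`. -/
theorem no_bad_pairs_implies_diagonal_periodicity (b x1 x2 y1 y2 x0 : ℕ)
    (hb : 0 < b) (hx1 : 0 < x1) (hx2 : 0 < x2)
    (SG : ℕ → ℕ → ℕ) (hSG : IsLengyelSG b x1 y1 x2 y2 SG)
    (hnobad : ¬ ∃ x y x' y' : ℕ, x0 ≤ x ∧ x0 ≤ x' ∧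
      min (SG x y) 2 = 2 ∧ min (SG x' y') 2 = 2 ∧
      (x : ℤ) - (x' : ℤ) = (x1 : ℤ) - (x2 : ℤ) ∧ (y : ℤ) - (y' : ℤ) = (y2 : ℤ) - (y1 : ℤ)) :
    ∀ x y : ℕ, x0 + max x1 x2 ≤ x → y1 + y2 ≤ y →
      min (SG x y) 2 = min (SG (x + x1 + x2) (y - (y1 + y2))) 2 := by
  intro x y hx hy
  obtain ⟨w, rfl⟩ : ∃ w, y = w + y1 + y2 := ⟨y - (y1 + y2), by lia⟩
  obtain ⟨z1, hz1⟩ : ∃ z1, z1 + x1 = x := ⟨x - x1, by lia⟩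
  obtain ⟨z2, hz2⟩ : ∃ z2, z2 + x2 = x := ⟨x - x2, by lia⟩
  have h := hSG.isTransferGrundy hx1 hx2
  have not_isBadPair (u v : ℕ) (hu1 : x0 ≤ u + x1) (hu2 : x0 ≤ u + x2) :
      ¬ IsBadPair x1 y1 x2 y2 SG u v := fun hbad =>
    hnobad ⟨u + x1, v + y2, u + x2, v + y1, hu1, hu2, min_eq_right hbad.1, min_eq_right hbad.2,
      by lia, by lia⟩
  rw [add_assoc w, Nat.add_sub_cancel, ← add_assoc]
  rcases lt_or_ge (SG x (w + y1 + y2)) 2 with hlt | hle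
  · rw [h.diagonal_eq_of_lt_two (not_isBadPair x w (by lia) (by lia)) hlt]
  · have hle' : 2 ≤ SG (x + x1 + x2) w :=
      h.two_le_diagonal hz1 hz2 (not_isBadPair z1 _ (by lia) (by lia))
        (not_isBadPair z2 _ (by lia) (by lia)) hle
    rw [min_eq_right hle, min_eq_right hle']
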